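/- Assume G is an elementary abelian 2-group with |G| = n, the characteristic of F is not 2, and the image of n in F equals 2 (i.e. n ≡ 2 mod p where p = char F). Then there is a surjective F-algebra homomorphism from the Terwilliger F-algebra T onto M₆(F) × M₄(F) × F whose kernel K is a nilpotent two-sided ideal of T (there exists m ≥ 1 such that any product of m elements of K equals the zero matrix). Consequently T/Rad T ≅ M₆(F) ⊕ M₄(F) ⊕ M₁(F) as F-algebras, where Rad T = K is the Jacobson radical of T. -/

import Mathlib

open Matrix

abbrev XG (G : Type) [Group G] : Type := {v : Fin 3 → G // v 0 * v 1 = v 2}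

def cIdx : Fin 5 → Fin 3
  | 0 => 0
  | 1 => 0
  | 2 => 1
  | 3 => 2
  | 4 => 0

def rel {G : Type} [Group G] (i : Fin 5) (y z : XG G) : Prop :=
  if i = 0 then y = z
  else if i = 4 then ∀ d : Fin 3, y.1 d ≠ z.1 d
  else y ≠ z ∧ y.1 (cIdx i) = z.1 (cIdx i)

instance {G : Type} [Group G] [DecidableEq G] (i : Fin 5) (y z : XG G) :
    Decidable (rel i y z) := by
  unfold rel
  infer_instance

def Adj (F : Type) [Field F] {G : Type} [Group G] [DecidableEq G] (i : Fin 5) :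
    Matrix (XG G) (XG G) F :=
  Matrix.of fun y z => if rel i y z then 1 else 0

def DualE (F : Type) [Field F] {G : Type} [Group G] [DecidableEq G] (x : XG G) (i : Fin 5) :
    Matrix (XG G) (XG G) F :=
  Matrix.of fun y z => if y = z ∧ rel i x y then 1 else 0

def AllOne (F : Type) [Field F] (G : Type) [Group G] : Matrix (XG G) (XG G) F :=
  Matrix.of fun _ _ => 1

def genSet (F : Type) [Field F] (G : Type) [Group G] [Fintype G] [DecidableEq G]
    (x : XG G) : Set (Matrix (XG G) (XG G) F) :=
  {M | ∃ a b c : Fin 5, M = DualE F x a * Adj F b * DualE F x c}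

def TerwilligerAlg (F : Type) [Field F] (G : Type) [Group G] [Fintype G] [DecidableEq G]
    (x : XG G) : Subalgebra F (Matrix (XG G) (XG G) F) :=
  Algebra.adjoin F (genSet F G x)

/-!
Describe a point `y` by its displacements from the base point `x`. As `G` is an elementary abelian
2-group, a point agreeing with `x` in exactly one coordinate has the same displacement `g ≠ 1` in
the two other ones. So every `g ≠ 1` carries a matrix `Q_g` of six columns: the three points
obtained in this way and the characteristic vectors of the three sets of points displaced by `g` in
a given coordinate. Let `U` be the matrix of the characteristic vectors of the five classes
`{y : (x, y) ∈ R_i}`. All Gram matrices are uniform in `g`: `Q_gᵀ Q_h = δ_{gh} N + K`, with `N`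
invertible as soon as `2` is, and `∑ Q_g` is expressed by the columns of `U`. It follows that
`T = {∑ Q_g A Q_gᵀ + U B Uᵀ + c}`.

On the columns of a difference `Q_g - Q_h` the terms involving `K` and `U` cancel, and `T` acts by
the matrices `A N + c`; this is the factor `M₆(F)`. Since `n = 2` in `F`, the class sizes
`1, n - 1, n - 1, n - 1, (n - 1)(n - 2)` become `1, 1, 1, 1, 0`, so that `Uᵀ U` is
`diag(1, 1, 1, 1, 0)`. Hence `T` acts on the columns of `U` by block triangular matrices, with
diagonal blocks of sizes `4` and `1`. What is killed by all three actions has the form `U B Uᵀ`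
with `B` supported in the last row and the last column, and the product of any three such matrices
vanishes because of the last `0` of `Uᵀ U`.
-/

section Compression

variable {R X m : Type*} [CommRing R] [Fintype X] [DecidableEq X] [Fintype m] [DecidableEq m]

/-- The action of an algebra `S` of matrices on an invariant column space, that of `W`, written in
the basis given by the columns of `W`; the left inverse `L` of `W` reads off coordinates. -/
def compression (S : Subalgebra R (Matrix X X R)) (L : Matrix m X R) (W : Matrix X m R)
    (hLW : L * W = 1) (hW : ∀ t ∈ S, ∃ M : Matrix m m R, t * W = W * M) : S →ₐ[R] Matrix m m R :=
  AlgHom.ofLinearMap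
    { toFun := fun t ↦ L * t.1 * W
      map_add' := fun s t ↦ by simp [Matrix.mul_add, Matrix.add_mul]
      map_smul' := fun c t ↦ by simp }
    (by simp [hLW])
    (fun s t ↦ by
      obtain ⟨M, hM⟩ := hW t t.2
      have hLWM : L * (W * M) = M := by rw [← Matrix.mul_assoc, hLW, Matrix.one_mul]
      simp [Matrix.mul_assoc, hM, hLWM])

theorem compression_apply_of_mul_eq {S : Subalgebra R (Matrix X X R)} {L : Matrix m X R}
    {W : Matrix X m R} (hLW : L * W = 1) (hW : ∀ t ∈ S, ∃ M : Matrix m m R, t * W = W * M) {t : S}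
    {M : Matrix m m R} (hM : t.1 * W = W * M) : compression S L W hLW hW t = M := by
  change L * t.1 * W = M
  rw [Matrix.mul_assoc, hM, ← Matrix.mul_assoc, hLW, Matrix.one_mul]

end Compression

section DiagonalBlocks

variable {R A : Type*} [CommRing R] [Ring A] [Algebra R A] {n : ℕ}

/-- The diagonal blocks, of sizes `n` and `1`, of a representation by block lower triangular
matrices. -/
def diagonalBlocks (ρ : A →ₐ[R] Matrix (Fin (n + 1)) (Fin (n + 1)) R)
    (hρ : ∀ a (i : Fin n), ρ a i.castSucc (Fin.last n) = 0) :
    A →ₐ[R] Matrix (Fin n) (Fin n) R × R :=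
  AlgHom.ofLinearMap
    { toFun := fun a ↦ ((ρ a).submatrix Fin.castSucc Fin.castSucc, ρ a (Fin.last n) (Fin.last n))
      map_add' := fun a b ↦ by simp [Matrix.submatrix_add]
      map_smul' := fun c a ↦ by simp [Matrix.submatrix_smul] }
    (by simp [Matrix.submatrix_one _ (Fin.castSucc_injective n)])
    (fun a b ↦ by ext <;> simp [Matrix.mul_apply, Fin.sum_univ_castSucc, hρ])

end DiagonalBlocks

section FibreSum

variable {R X m ι : Type*} [CommRing R] [Fintype m] [Fintype ι]

/-- The linear map `B ↦ U B Uᵀ`. -/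
def sandwich (U : Matrix X m R) : Matrix m m R →ₗ[R] Matrix X X R where
  toFun B := U * B * Uᵀ
  map_add' B B' := by simp only [Matrix.mul_add, Matrix.add_mul]
  map_smul' c B := by simp

theorem sandwich_apply (U : Matrix X m R) (B : Matrix m m R) : sandwich U B = U * B * Uᵀ := rfl

theorem sandwich_single_apply [DecidableEq m] (U : Matrix X m R) (i j : m) (y z : X) :
    sandwich U (Matrix.single i j 1) y z = U y i * U z j := by
  simp [sandwich_apply, Matrix.mul_apply, Matrix.single_apply, ite_and]

/-- The linear map `A ↦ ∑ g, Q g * A * (Q g)ᵀ`, by which the same matrix `A` acts on the column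
spaces of all members of the family `Q`. -/
def fibreSum (Q : ι → Matrix X m R) : Matrix m m R →ₗ[R] Matrix X X R := ∑ g, sandwich (Q g)

theorem fibreSum_apply (Q : ι → Matrix X m R) (A : Matrix m m R) :
    fibreSum Q A = ∑ g, Q g * A * (Q g)ᵀ := by
  simp only [fibreSum, LinearMap.sum_apply, sandwich_apply]

theorem fibreSum_single_apply [DecidableEq m] (Q : ι → Matrix X m R) (i j : m) (y z : X) :
    fibreSum Q (Matrix.single i j 1) y z = ∑ g, Q g y i * Q g z j := by
  simp only [fibreSum, LinearMap.sum_apply, Matrix.sum_apply, sandwich_single_apply]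

theorem transpose_fibreSum (Q : ι → Matrix X m R) (A : Matrix m m R) :
    (fibreSum Q A)ᵀ = fibreSum Q Aᵀ := by
  simp only [fibreSum_apply, Matrix.transpose_sum, Matrix.transpose_mul, Matrix.transpose_transpose,
    Matrix.mul_assoc]

variable {k : Type*} [Fintype k] [DecidableEq X]

/-- The general element of the algebra attached to a Gram system. -/
def gramElement (Q : ι → Matrix X m R) (U : Matrix X k R) (A : Matrix m m R)
    (B : Matrix k k R) (c : R) : Matrix X X R :=
  fibreSum Q A + sandwich U B + c • 1

theorem gramElement_add (Q : ι → Matrix X m R) (U : Matrix X k R) (A A' : Matrix m m R)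
    (B B' : Matrix k k R) (c c' : R) :
    gramElement Q U A B c + gramElement Q U A' B' c' =
      gramElement Q U (A + A') (B + B') (c + c') := by
  simp only [gramElement, map_add, add_smul]
  abel

end FibreSum

section Truncation

variable {R : Type*} [CommRing R] {n : ℕ}

variable (R n) in
/-- The matrix `diag(1, …, 1, 0)`, the shape of the Gram matrix of vectors of which the last one is
orthogonal to all, itself included. -/
def truncation : Matrix (Fin (n + 1)) (Fin (n + 1)) R :=
  Matrix.diagonal fun i ↦ if i = Fin.last n then 0 else 1

theorem mul_truncation_apply {m : Type*} (B : Matrix m (Fin (n + 1)) R) (i : m) (j : Fin (n + 1)) :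
    (B * truncation R n) i j = if j = Fin.last n then 0 else B i j := by
  simp [truncation, Matrix.mul_diagonal]

theorem truncation_mul_mul_truncation {B : Matrix (Fin (n + 1)) (Fin (n + 1)) R}
    (hB : B.submatrix Fin.castSucc Fin.castSucc = 0) :
    truncation R n * B * truncation R n = 0 := by
  ext i j
  rw [mul_truncation_apply, truncation, Matrix.diagonal_mul]
  induction i using Fin.lastCases with
  | last => simp
  | cast i =>
    induction j using Fin.lastCases with
    | last => simp
    | cast j => simpa using congrFun₂ hB i j

theorem exists_submatrix_castSucc_eq (Z : Matrix (Fin n) (Fin n) R) :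
    ∃ B : Matrix (Fin (n + 1)) (Fin (n + 1)) R, B.submatrix Fin.castSucc Fin.castSucc = Z :=
  ⟨Matrix.of fun i j ↦ Fin.lastCases 0 (fun i' ↦ Fin.lastCases 0 (Z i') j) i, by ext; simp⟩

end Truncation

section GramSystem

variable {R X m k ι : Type*} [CommRing R] [Fintype X] [Fintype k] [Fintype ι] [DecidableEq ι]

/-- The Gram matrices of a family `Q g` of tuples of vectors and of one more tuple `U`, where the
sum of the `Q g` lies in the span of `U`. These relations make the matrices
`fibreSum Q A + sandwich U B + c • 1` an algebra. -/
structure IsGramSystem (Q : ι → Matrix X m R) (U : Matrix X k R) (N K : Matrix m m R)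
    (P : Matrix m k R) (D : Matrix k k R) : Prop where
  transpose_mul_fibre (g h : ι) : (Q g)ᵀ * Q h = (if g = h then N else 0) + K
  fibre_transpose_mul (g : ι) : (Q g)ᵀ * U = P * D
  transpose_mul_self : Uᵀ * U = D
  sum_fibre : ∑ g, Q g = U * Pᵀ

namespace IsGramSystem

variable {Q : ι → Matrix X m R} {U : Matrix X k R} {N K : Matrix m m R} {P : Matrix m k R}
  {D : Matrix k k R} (hQ : IsGramSystem Q U N K P D)

include hQ

theorem transpose_mul_fibre_eq (g : ι) : Uᵀ * Q g = D * Pᵀ := by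
  have hD : Dᵀ = D := by simp [← hQ.transpose_mul_self]
  rw [← Matrix.transpose_transpose (Uᵀ * Q g), Matrix.transpose_mul, Matrix.transpose_transpose,
    hQ.fibre_transpose_mul, Matrix.transpose_mul, hD]

theorem sandwich_mul_sandwich (B B' : Matrix k k R) :
    sandwich U B * sandwich U B' = sandwich U (B * D * B') := by
  simp only [sandwich_apply, ← hQ.transpose_mul_self, Matrix.mul_assoc]

theorem transpose_sub_mul_sub {g h : ι} (hgh : g ≠ h) :
    (Q g - Q h)ᵀ * (Q g - Q h) = (2 : R) • N := by
  simp only [Matrix.transpose_sub, Matrix.sub_mul, Matrix.mul_sub, hQ.transpose_mul_fibre, hgh,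
    hgh.symm, if_true, if_false, two_smul]
  abel

variable [Fintype m]

theorem exists_mul_sub_eq_one [DecidableEq m] (h2 : IsUnit (2 : R)) (hN : IsUnit N) {g h : ι}
    (hgh : g ≠ h) : ∃ L : Matrix m X R, L * (Q g - Q h) = 1 := by
  obtain ⟨c, hc⟩ := h2.exists_left_inv
  obtain ⟨N', hN'⟩ := hN.exists_left_inv
  refine ⟨c • (N' * (Q g - Q h)ᵀ), ?_⟩
  rw [Matrix.smul_mul, Matrix.mul_assoc, hQ.transpose_sub_mul_sub hgh, Matrix.mul_smul, hN',
    smul_smul, hc, one_smul]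

theorem fibreSum_mul_fibre (A : Matrix m m R) (h : ι) :
    fibreSum Q A * Q h = Q h * (A * N) + U * (Pᵀ * A * K) := by
  have hterm (g : ι) : Q g * (A * ((if g = h then N else 0) + K)) =
      (if g = h then Q h * (A * N) else 0) + Q g * (A * K) := by
    split_ifs with hgh
    · rw [hgh, Matrix.mul_add, Matrix.mul_add]
    · rw [zero_add, zero_add]
  calc fibreSum Q A * Q h = ∑ g, Q g * (A * ((if g = h then N else 0) + K)) := by
        simp only [fibreSum_apply, Matrix.sum_mul, Matrix.mul_assoc, hQ.transpose_mul_fibre]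
    _ = Q h * (A * N) + (∑ g, Q g) * (A * K) := by
        simp only [hterm, Finset.sum_add_distrib, Finset.sum_ite_eq', Finset.mem_univ, if_true,
          Matrix.sum_mul]
    _ = Q h * (A * N) + U * (Pᵀ * A * K) := by simp only [hQ.sum_fibre, Matrix.mul_assoc]

theorem fibreSum_mul_fibreSum (A A' : Matrix m m R) :
    fibreSum Q A * fibreSum Q A' =
      fibreSum Q (A * N * A') + sandwich U (Pᵀ * (A * K * A') * P) := by
  calc fibreSum Q A * fibreSum Q A'
      = ∑ h, (fibreSum Q A * Q h) * (A' * (Q h)ᵀ) := by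
        simp only [fibreSum_apply Q A', Matrix.mul_sum, Matrix.mul_assoc]
    _ = fibreSum Q (A * N * A') + U * (Pᵀ * A * K) * (A' * (∑ h, Q h)ᵀ) := by
        rw [fibreSum_apply Q (A * N * A')]
        simp only [hQ.fibreSum_mul_fibre, Matrix.add_mul, Finset.sum_add_distrib,
          Matrix.mul_assoc, Matrix.mul_sum, Matrix.transpose_sum]
    _ = fibreSum Q (A * N * A') + sandwich U (Pᵀ * (A * K * A') * P) := by
        simp only [hQ.sum_fibre, sandwich_apply, Matrix.transpose_mul, Matrix.transpose_transpose,
          Matrix.mul_assoc]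

theorem fibreSum_single_mul_single [DecidableEq m] {l : m} (hN : N l l = 1) (hK : K l l = 0)
    (i j : m) :
    fibreSum Q (Matrix.single i l 1) * fibreSum Q (Matrix.single l j 1) =
      fibreSum Q (Matrix.single i j 1) := by
  simp [hQ.fibreSum_mul_fibreSum, Matrix.single_mul_mul_single, hN, hK]

theorem fibreSum_mul (A : Matrix m m R) : fibreSum Q A * U = U * (Pᵀ * A * P * D) := by
  calc fibreSum Q A * U = (∑ g, Q g) * (A * (P * D)) := by
        simp only [fibreSum_apply, Matrix.sum_mul, Matrix.mul_assoc, hQ.fibre_transpose_mul]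
    _ = U * (Pᵀ * A * P * D) := by simp only [hQ.sum_fibre, Matrix.mul_assoc]

theorem transpose_mul_fibreSum (A : Matrix m m R) : Uᵀ * fibreSum Q A = D * (Pᵀ * A * P) * Uᵀ := by
  calc Uᵀ * fibreSum Q A = D * Pᵀ * A * (∑ g, Q g)ᵀ := by
        simp only [fibreSum_apply, Matrix.mul_sum, Matrix.transpose_sum, ← Matrix.mul_assoc,
          hQ.transpose_mul_fibre_eq]
    _ = D * (Pᵀ * A * P) * Uᵀ := by
        simp only [hQ.sum_fibre, Matrix.transpose_mul, Matrix.transpose_transpose, Matrix.mul_assoc]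

theorem sandwich_mul_fibreSum (A : Matrix m m R) (B : Matrix k k R) :
    sandwich U B * fibreSum Q A = sandwich U (B * D * (Pᵀ * A * P)) := by
  simp only [sandwich_apply, Matrix.mul_assoc, hQ.transpose_mul_fibreSum]

theorem fibreSum_mul_sandwich (A : Matrix m m R) (B : Matrix k k R) :
    fibreSum Q A * sandwich U B = sandwich U (Pᵀ * A * P * D * B) := by
  simp only [sandwich_apply, ← Matrix.mul_assoc, hQ.fibreSum_mul]

variable [DecidableEq X]

theorem gramElement_mul_gramElement (A A' : Matrix m m R) (B B' : Matrix k k R) (c c' : R) :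
    gramElement Q U A B c * gramElement Q U A' B' c' =
      gramElement Q U (A * N * A' + c' • A + c • A')
        (Pᵀ * (A * K * A') * P + Pᵀ * A * P * D * B' + B * D * (Pᵀ * A' * P) + B * D * B' + c' • B
          + c • B') (c * c') := by
  simp only [gramElement, add_mul, mul_add, hQ.fibreSum_mul_fibreSum, hQ.fibreSum_mul_sandwich,
    hQ.sandwich_mul_fibreSum, hQ.sandwich_mul_sandwich, smul_mul_assoc, mul_smul_comm, mul_one,
    one_mul, map_add, map_smul, smul_add, smul_smul, mul_comm c' c]
  abel

theorem gramElement_mul [DecidableEq k] (A : Matrix m m R) (B : Matrix k k R) (c : R) :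
    gramElement Q U A B c * U = U * ((Pᵀ * A * P + B) * D + c • 1) := by
  simp only [gramElement, sandwich_apply, Matrix.add_mul, Matrix.mul_add, hQ.fibreSum_mul,
    Matrix.mul_assoc, hQ.transpose_mul_self, Matrix.smul_mul, Matrix.mul_smul, Matrix.one_mul,
    Matrix.mul_one]

theorem gramElement_mul_sub [DecidableEq m] (A : Matrix m m R) (B : Matrix k k R) (c : R)
    (g h : ι) :
    gramElement Q U A B c * (Q g - Q h) = (Q g - Q h) * (A * N + c • 1) := by
  simp only [gramElement, sandwich_apply, Matrix.mul_sub, Matrix.add_mul, Matrix.sub_mul,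
    Matrix.mul_add, hQ.fibreSum_mul_fibre, Matrix.mul_assoc, hQ.transpose_mul_fibre_eq,
    Matrix.smul_mul, Matrix.mul_smul, Matrix.one_mul, Matrix.mul_one, smul_sub]
  abel

/-- The algebra attached to a Gram system. -/
def subalgebra : Subalgebra R (Matrix X X R) where
  carrier := {t | ∃ A B c, t = gramElement Q U A B c}
  mul_mem' := by
    rintro _ _ ⟨A, B, c, rfl⟩ ⟨A', B', c', rfl⟩
    exact ⟨_, _, _, hQ.gramElement_mul_gramElement A A' B B' c c'⟩
  add_mem' := by
    rintro _ _ ⟨A, B, c, rfl⟩ ⟨A', B', c', rfl⟩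
    exact ⟨_, _, _, gramElement_add Q U A A' B B' c c'⟩
  algebraMap_mem' c := ⟨0, 0, c, by simp [gramElement, Algebra.algebraMap_eq_smul_one]⟩

theorem fibreSum_mem_subalgebra (A : Matrix m m R) : fibreSum Q A ∈ hQ.subalgebra :=
  ⟨A, 0, 0, by simp [gramElement]⟩

theorem sandwich_mem_subalgebra (B : Matrix k k R) : sandwich U B ∈ hQ.subalgebra :=
  ⟨0, B, 0, by simp [gramElement]⟩

theorem subalgebra_le {S : Subalgebra R (Matrix X X R)} (hA : ∀ A, fibreSum Q A ∈ S)
    (hB : ∀ B, sandwich U B ∈ S) : hQ.subalgebra ≤ S := by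
  rintro _ ⟨A, B, c, rfl⟩
  exact add_mem (add_mem (hA A) (hB B)) (S.smul_mem (one_mem S) c)

end IsGramSystem

end GramSystem

section SimpleQuotient

variable {R X m ι : Type*} [CommRing R] [Fintype X] [DecidableEq X] [Fintype m] [DecidableEq m]
  [Fintype ι] [DecidableEq ι] {n : ℕ} {Q : ι → Matrix X m R} {U : Matrix X (Fin (n + 1)) R}
  {N K : Matrix m m R} {P : Matrix m (Fin (n + 1)) R}

namespace IsGramSystem

theorem exists_algHom (hQ : IsGramSystem Q U N K P (truncation R n)) (h2 : IsUnit (2 : R))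
    (hN : IsUnit N) [Nontrivial ι] (hU : ∃ L : Matrix (Fin (n + 1)) X R, L * U = 1) :
    ∃ φ : hQ.subalgebra →ₐ[R] Matrix m m R × Matrix (Fin n) (Fin n) R × R,
      ∀ (t : hQ.subalgebra) (A B c), t.1 = gramElement Q U A B c →
        φ t = (A * N + c • 1, (Pᵀ * A * P + B).submatrix Fin.castSucc Fin.castSucc + c • 1, c) := by
  obtain ⟨g, h, hgh⟩ := exists_pair_ne ι
  obtain ⟨L, hL⟩ := hQ.exists_mul_sub_eq_one h2 hN hgh
  obtain ⟨L', hL'⟩ := hU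
  have hW : ∀ t ∈ hQ.subalgebra, ∃ M : Matrix m m R, t * (Q g - Q h) = (Q g - Q h) * M := by
    rintro _ ⟨A, B, c, rfl⟩
    exact ⟨_, hQ.gramElement_mul_sub A B c g h⟩
  have hW' : ∀ t ∈ hQ.subalgebra,
      ∃ M : Matrix (Fin (n + 1)) (Fin (n + 1)) R, t * U = U * M := by
    rintro _ ⟨A, B, c, rfl⟩
    exact ⟨_, hQ.gramElement_mul A B c⟩
  let ρ := compression hQ.subalgebra L' U hL' hW'
  have hρ (t : hQ.subalgebra) (A B c) (ht : t.1 = gramElement Q U A B c) :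
      ρ t = (Pᵀ * A * P + B) * truncation R n + c • 1 :=
    compression_apply_of_mul_eq hL' hW' (ht ▸ hQ.gramElement_mul A B c)
  have hρ_last (t : hQ.subalgebra) (i : Fin n) : ρ t i.castSucc (Fin.last n) = 0 := by
    obtain ⟨A, B, c, ht⟩ := t.2
    simp [hρ t A B c ht, mul_truncation_apply]
  refine ⟨(compression hQ.subalgebra L (Q g - Q h) hL hW).prod (diagonalBlocks ρ hρ_last),
    fun t A B c ht ↦ Prod.ext ?_ (Prod.ext ?_ ?_)⟩
  · exact compression_apply_of_mul_eq hL hW (ht ▸ hQ.gramElement_mul_sub A B c g h)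
  · ext i j
    simp [diagonalBlocks, hρ t A B c ht, mul_truncation_apply, Matrix.one_apply]
  · simp [diagonalBlocks, hρ t A B c ht, mul_truncation_apply]

theorem exists_surjective_algHom (hQ : IsGramSystem Q U N K P (truncation R n))
    (h2 : IsUnit (2 : R)) (hN : IsUnit N) [Nontrivial ι]
    (hU : ∃ L : Matrix (Fin (n + 1)) X R, L * U = 1) :
    ∃ φ : hQ.subalgebra →ₐ[R] Matrix m m R × Matrix (Fin n) (Fin n) R × R,
      Function.Surjective φ ∧ ∀ s t u, φ s = 0 → φ t = 0 → φ u = 0 → s * t * u = 0 := by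
  obtain ⟨φ, hφ⟩ := hQ.exists_algHom h2 hN hU
  have hker (t : hQ.subalgebra) (ht : φ t = 0) : ∃ B : Matrix (Fin (n + 1)) (Fin (n + 1)) R,
      t.1 = sandwich U B ∧ B.submatrix Fin.castSucc Fin.castSucc = 0 := by
    obtain ⟨A, B, c, htA⟩ := t.2
    obtain ⟨hA, hB, rfl⟩ : A * N + c • 1 = 0 ∧
        (Pᵀ * A * P + B).submatrix Fin.castSucc Fin.castSucc + c • 1 = 0 ∧ c = 0 := by
      simpa [hφ t A B c htA] using ht
    obtain rfl : A = 0 := by simpa [hN.mul_left_eq_zero] using hA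
    exact ⟨B, by simpa [gramElement] using htA, by simpa using hB⟩
  refine ⟨φ, fun ⟨M, Z, c⟩ ↦ ?_, fun s t u hs ht hu ↦ ?_⟩
  · obtain ⟨N', hN'⟩ := hN.exists_left_inv
    obtain ⟨B, hB⟩ := exists_submatrix_castSucc_eq (Z - c • 1)
    refine ⟨⟨gramElement Q U ((M - c • 1) * N') (B - Pᵀ * ((M - c • 1) * N') * P) c,
      _, _, _, rfl⟩, ?_⟩
    rw [hφ _ _ _ _ rfl, Matrix.mul_assoc, hN', add_sub_cancel, hB]
    simp
  · obtain ⟨B, hsB, -⟩ := hker s hs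
    obtain ⟨B', htB, hB'⟩ := hker t ht
    obtain ⟨B'', huB, -⟩ := hker u hu
    have hDBD : B * truncation R n * B' * truncation R n = 0 := by
      rw [Matrix.mul_assoc, Matrix.mul_assoc, ← Matrix.mul_assoc _ B',
        truncation_mul_mul_truncation hB', Matrix.mul_zero]
    ext1
    simp [hsB, htB, huB, hQ.sandwich_mul_sandwich, hDBD]

end IsGramSystem

end SimpleQuotient

section LatinSquare

variable {G : Type} [Group G]

theorem bijective_coordPair {d e : Fin 3} (hde : d ≠ e) :
    Function.Bijective fun y : XG G ↦ (y.1 d, y.1 e) := by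
  wlog hlt : d < e generalizing d e
  · exact Prod.swap_bijective.comp (this hde.symm (by omega))
  have hcases : (d = 0 ∧ e = 1) ∨ (d = 0 ∧ e = 2) ∨ (d = 1 ∧ e = 2) := by omega
  refine ⟨fun ⟨y, hy⟩ ⟨z, hz⟩ hyz ↦ Subtype.ext ?_, fun ⟨a, b⟩ ↦ ?_⟩
  · obtain ⟨hd : y d = z d, he : y e = z e⟩ := Prod.ext_iff.1 hyz
    suffices h : y 0 = z 0 ∧ y 1 = z 1 ∧ y 2 = z 2 by
      ext i
      fin_cases i
      exacts [h.1, h.2.1, h.2.2]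
    obtain ⟨rfl, rfl⟩ | ⟨rfl, rfl⟩ | ⟨rfl, rfl⟩ := hcases
    · exact ⟨hd, he, by rw [← hy, ← hz, hd, he]⟩
    · exact ⟨hd, mul_left_cancel (a := y 0) (by rw [hy, he, ← hz, hd]), he⟩
    · exact ⟨mul_right_cancel (b := y 1) (by rw [hy, he, ← hz, hd]), hd, he⟩
  · obtain ⟨rfl, rfl⟩ | ⟨rfl, rfl⟩ | ⟨rfl, rfl⟩ := hcases
    · exact ⟨⟨![a, b, a * b], by simp⟩, by simp⟩
    · exact ⟨⟨![a, a⁻¹ * b, b], by simp⟩, by simp⟩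
    · exact ⟨⟨![b * a⁻¹, a, b], by simp⟩, by simp⟩

theorem eq_of_coord_eq {d e : Fin 3} (hde : d ≠ e) {y z : XG G} (hd : y.1 d = z.1 d)
    (he : y.1 e = z.1 e) : y = z :=
  (bijective_coordPair hde).injective (Prod.ext hd he)

end LatinSquare

section Relation

variable {G : Type} [Group G]

/-- The index of the relation `R_Δ` attached to the coordinate `Δ = d + 1`, coordinates being
numbered from `0`. -/
abbrev coordClass (d : Fin 3) : Fin 5 := d.succ.castSucc

theorem sum_fin_five {M : Type*} [AddCommMonoid M] (f : Fin 5 → M) :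
    ∑ i, f i = f 0 + ∑ d, f (coordClass d) + f (Fin.last 4) := by
  rw [Fin.sum_univ_castSucc, Fin.sum_univ_succ, Fin.castSucc_zero]

theorem fin_five_cases (i : Fin 5) : i = 0 ∨ (∃ d, i = coordClass d) ∨ i = Fin.last 4 := by
  revert i
  decide

theorem rel_zero_iff {y z : XG G} : rel 0 y z ↔ y = z := by simp [rel]

theorem rel_coordClass_iff {d : Fin 3} {y z : XG G} :
    rel (coordClass d) y z ↔ y ≠ z ∧ y.1 d = z.1 d := by
  fin_cases d <;> simp [rel, cIdx, coordClass]

theorem rel_last_iff {y z : XG G} : rel (Fin.last 4) y z ↔ ∀ d, y.1 d ≠ z.1 d := by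
  simp [rel, Fin.last]

theorem rel_comm {i : Fin 5} {y z : XG G} : rel i y z ↔ rel i z y := by
  simp only [rel, eq_comm, ne_comm, ne_eq]

theorem existsUnique_rel (y z : XG G) : ∃! i, rel i y z := by
  rcases eq_or_ne y z with rfl | hyz
  · refine ⟨0, rel_zero_iff.2 rfl, fun i hi ↦ ?_⟩
    obtain rfl | ⟨d, rfl⟩ | rfl := fin_five_cases i
    · rfl
    · exact absurd rfl (rel_coordClass_iff.1 hi).1
    · exact absurd rfl (rel_last_iff.1 hi 0)
  by_cases h : ∃ d, y.1 d = z.1 d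
  · obtain ⟨d, hd⟩ := h
    refine ⟨coordClass d, rel_coordClass_iff.2 ⟨hyz, hd⟩, fun i hi ↦ ?_⟩
    obtain rfl | ⟨e, rfl⟩ | rfl := fin_five_cases i
    · exact absurd (rel_zero_iff.1 hi) hyz
    · by_contra hed
      have hed' : e ≠ d := fun h ↦ hed (congrArg coordClass h)
      exact hyz (eq_of_coord_eq hed' (rel_coordClass_iff.1 hi).2 hd)
    · exact absurd hd (rel_last_iff.1 hi d)
  · push Not at h
    refine ⟨Fin.last 4, rel_last_iff.2 h, fun i hi ↦ ?_⟩
    obtain rfl | ⟨d, rfl⟩ | rfl := fin_five_cases i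
    · exact absurd (rel_zero_iff.1 hi) hyz
    · exact absurd (rel_coordClass_iff.1 hi).2 (h d)
    · rfl

/-- The index of the relation to which the pair `(y, z)` belongs. -/
noncomputable def relIndex (y z : XG G) : Fin 5 := (existsUnique_rel y z).choose

theorem relIndex_eq_iff {y z : XG G} {i : Fin 5} : relIndex y z = i ↔ rel i y z :=
  ⟨fun h ↦ h ▸ (existsUnique_rel y z).choose_spec.1,
    fun h ↦ ((existsUnique_rel y z).choose_spec.2 i h).symm⟩

theorem coord_eq_iff {d : Fin 3} {y z : XG G} :
    y.1 d = z.1 d ↔ relIndex y z = 0 ∨ relIndex y z = coordClass d := by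
  rw [relIndex_eq_iff, relIndex_eq_iff, rel_zero_iff, rel_coordClass_iff]
  by_cases h : y = z <;> simp [h]

end Relation

section Offset

variable {G : Type} [Group G]

/-- The displacement of `y` from the base point `x` in the coordinate `d`. -/
def offset (x y : XG G) (d : Fin 3) : G := y.1 d / x.1 d

variable {x y z : XG G} {d e f : Fin 3}

theorem offset_eq_offset_iff : offset x y d = offset x z d ↔ y.1 d = z.1 d :=
  div_left_inj

theorem offset_eq_one_iff : offset x y d = 1 ↔ relIndex x y = 0 ∨ relIndex x y = coordClass d := by
  rw [← coord_eq_iff, eq_comm (a := x.1 d)]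
  exact div_eq_one

theorem bijective_offsetPair (x : XG G) (hde : d ≠ e) :
    Function.Bijective fun y ↦ (offset x y d, offset x y e) :=
  ((Equiv.divRight (x.1 d)).bijective.prodMap (Equiv.divRight (x.1 e)).bijective).comp
    (bijective_coordPair hde)

theorem offset_zero_mul_offset_one (helem : ∀ a : G, a ^ 2 = 1) :
    offset x y 0 * offset x y 1 = offset x y 2 := by
  let : CommGroup G :=
    { mul_comm := Commute.of_orderOf_dvd_two fun g ↦ orderOf_dvd_of_pow_eq_one (helem g) }
  simp only [offset, ← y.2, ← x.2]
  exact div_mul_div_comm _ _ _ _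

theorem offset_eq_offset_of_eq_one (helem : ∀ a : G, a ^ 2 = 1) (hd : offset x y d = 1) (he : e ≠ d)
    (hf : f ≠ d) : offset x y e = offset x y f := by
  have hinv (a b : G) (hab : a * b = 1) : a = b := by
    rw [eq_inv_of_mul_eq_one_left hab, inv_eq_of_mul_eq_one_left ((sq b).symm.trans (helem b))]
  have hmul := offset_zero_mul_offset_one (x := x) (y := y) helem
  generalize offset x y = o at hd hmul ⊢
  have hsucc : o (d + 1) = o (d + 2) := by
    fin_cases d
    · change o 1 = o 2
      rw [← hmul, show o 0 = 1 from hd, one_mul]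
    · change o 2 = o 0
      rw [← hmul, show o 1 = 1 from hd, mul_one]
    · exact hinv _ _ (hmul.trans hd)
  obtain rfl | rfl : e = d + 1 ∨ e = d + 2 := by omega
  all_goals obtain rfl | rfl : f = d + 1 ∨ f = d + 2 := by omega
  exacts [rfl, hsucc, hsucc.symm, rfl]

variable [Fintype G] [DecidableEq G] (R : Type*) [CommRing R]

theorem sum_ite_offset_and_offset (x : XG G) (hde : d ≠ e) (a b : G) :
    ∑ y, (if offset x y d = a ∧ offset x y e = b then 1 else 0 : R) = 1 := by
  simpa [ite_and, Fintype.sum_prod_type] using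
    (bijective_offsetPair x hde).sum_comp fun p : G × G ↦ if p.1 = a ∧ p.2 = b then (1 : R) else 0

theorem sum_ite_offset (x : XG G) (d : Fin 3) (a : G) :
    ∑ y, (if offset x y d = a then 1 else 0 : R) = Fintype.card G := by
  obtain ⟨e, he⟩ := exists_ne d
  simpa [Fintype.sum_prod_type_right, -Finset.sum_boole] using
    (bijective_offsetPair x he.symm).sum_comp fun p : G × G ↦ if p.1 = a then (1 : R) else 0

end Offset

section CoefficientMatrices

variable (R : Type*) [CommRing R]

/-- The adjacency matrix of the complete graph on the three coordinates, recording that a point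
agreeing with the base point in one coordinate is displaced from it in the two others. -/
def coordAdj : Matrix (Fin 3) (Fin 3) R :=
  (SimpleGraph.completeGraph (Fin 3)).adjMatrix R

/-- The Gram matrix of the columns of two fibre matrices `fibreMatrix x g`, `fibreMatrix x h` with
`g ≠ h`. -/
def crossGram : Matrix (Fin 3 ⊕ Fin 3) (Fin 3 ⊕ Fin 3) R := fromBlocks 0 0 0 (coordAdj R)

/-- The excess over `crossGram` of the Gram matrix of the columns of one matrix
`fibreMatrix x g`. The scalar `2` stands for the image of `|G|` in `R`. -/
def excessGram : Matrix (Fin 3 ⊕ Fin 3) (Fin 3 ⊕ Fin 3) R :=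
  fromBlocks 1 (coordAdj R) (coordAdj R) ((2 : R) • 1)

/-- The coefficients expressing the sum of all matrices `fibreMatrix x g` in terms of
`classMatrix x`. -/
def fibreCoeff : Matrix (Fin 3 ⊕ Fin 3) (Fin 5) R :=
  Matrix.of (Sum.elim (fun d i ↦ if i = coordClass d then 1 else 0)
    (fun d i ↦ if i = 0 ∨ i = coordClass d then 0 else 1))

variable {R}

theorem coordAdj_mul_self : coordAdj R * coordAdj R = coordAdj R + (2 : R) • 1 := by
  have hJJ : (of 1 * of 1 : Matrix (Fin 3) (Fin 3) R) = (3 : R) • of 1 := by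
    ext
    simp [Matrix.mul_apply]
  rw [coordAdj, SimpleGraph.adjMatrix_completeGraph_eq_of_one_sub_one, sub_mul, mul_sub, hJJ,
    mul_one, one_mul]
  module

theorem isUnit_excessGram (h2 : IsUnit (2 : R)) : IsUnit (excessGram R) := by
  obtain ⟨c, hc⟩ := h2.exists_right_inv
  have hdiag : coordAdj R * (1 - coordAdj R) = -((2 : R) • 1) := by
    rw [Matrix.mul_sub, Matrix.mul_one, coordAdj_mul_self]
    abel
  have hinv : excessGram R * fromBlocks (1 - coordAdj R) 1 1 (c • (1 - coordAdj R)) = 1 := by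
    rw [excessGram, fromBlocks_multiply, ← fromBlocks_one]
    simp [hdiag, smul_smul, hc, mul_comm c]
  exact IsUnit.of_mul_eq_one _ hinv

theorem excessGram_eq_fibreCoeff (j : Fin 3 ⊕ Fin 3) (e : Fin 3) :
    excessGram R j (Sum.inl e) = fibreCoeff R j (coordClass e) := by
  rcases j with d | d <;>
    simp [excessGram, coordAdj, fibreCoeff, Matrix.one_apply, coordClass, eq_comm]

theorem fibreCoeff_apply_zero (j : Fin 3 ⊕ Fin 3) : fibreCoeff R j 0 = 0 := by
  have hne (d : Fin 3) : (0 : Fin 5) ≠ coordClass d := by revert d; decide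
  rcases j with d | d
  · simp only [fibreCoeff, Matrix.of_apply, Sum.elim_inl, hne d, if_false]
  · simp only [fibreCoeff, Matrix.of_apply, Sum.elim_inr, true_or, if_true]

end CoefficientMatrices

section ClassMatrix

variable {G : Type} [Group G] (R : Type*) [CommRing R]

/-- The matrix whose columns are the characteristic vectors of the five classes
`{y : (x, y) ∈ R_i}` of points. -/
noncomputable def classMatrix (x : XG G) : Matrix (XG G) (Fin 5) R :=
  (1 : Matrix (Fin 5) (Fin 5) R).submatrix (relIndex x) id

variable {R} {x y : XG G}

theorem classMatrix_apply {i : Fin 5} :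
    classMatrix R x y i = if relIndex x y = i then 1 else 0 :=
  Matrix.one_apply

theorem classMatrix_apply_zero [DecidableEq G] :
    classMatrix R x y 0 = if y = x then 1 else 0 := by
  simp only [classMatrix_apply, relIndex_eq_iff, rel_zero_iff, eq_comm]

theorem classMatrix_mul_apply {m : Type*} (M : Matrix (Fin 5) m R) (j : m) :
    (classMatrix R x * M) y j = M (relIndex x y) j := by
  simp [Matrix.mul_apply, classMatrix_apply]

theorem sum_classMatrix_row : ∑ i, classMatrix R x y i = 1 := by simp [classMatrix_apply]

theorem sandwich_classMatrix_one :
    sandwich (classMatrix R x) (Matrix.of fun _ _ ↦ 1) = Matrix.of fun _ _ ↦ 1 := by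
  ext y z
  simp [sandwich_apply, Matrix.mul_apply, sum_classMatrix_row]

end ClassMatrix

section FibreMatrix

variable {G : Type} [Group G] [DecidableEq G] (R : Type*) [CommRing R]

/-- The matrix whose columns are the characteristic vectors of the points `y` with `y_d = x_d` and
all other coordinates displaced from those of `x` by `g` (column `inl d`), respectively with the
coordinate `d` displaced by `g` (column `inr d`). -/
def fibreMatrix (x : XG G) (g : G) : Matrix (XG G) (Fin 3 ⊕ Fin 3) R :=
  Matrix.of fun y ↦ Sum.elim
    (fun d ↦ if offset x y d = 1 ∧ ∀ e, e ≠ d → offset x y e = g then 1 else 0)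
    (fun d ↦ if offset x y d = g then 1 else 0)

variable {R} {x y : XG G} {g h : G} {d e : Fin 3}

theorem fibreMatrix_inr : fibreMatrix R x g y (Sum.inr d) = if offset x y d = g then 1 else 0 :=
  rfl

theorem fibreMatrix_inl (helem : ∀ a : G, a ^ 2 = 1) (hed : e ≠ d) :
    fibreMatrix R x g y (Sum.inl d) = if offset x y d = 1 ∧ offset x y e = g then 1 else 0 := by
  have hiff : (offset x y d = 1 ∧ ∀ e, e ≠ d → offset x y e = g) ↔
      offset x y d = 1 ∧ offset x y e = g :=
    and_congr_right fun hd ↦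
      ⟨fun h ↦ h e hed, fun he f hf ↦ (offset_eq_offset_of_eq_one helem hd hf hed).trans he⟩
  simp only [fibreMatrix, Matrix.of_apply, Sum.elim_inl, hiff]

theorem fibreMatrix_self (hg : g ≠ 1) (j : Fin 3 ⊕ Fin 3) : fibreMatrix R x g x j = 0 := by
  have hone (d : Fin 3) : offset x x d = 1 := div_self' _
  rcases j with d | d
  · obtain ⟨e, he⟩ := exists_ne d
    simp only [fibreMatrix, Matrix.of_apply, Sum.elim_inl, hone]
    exact if_neg fun h ↦ hg (h.2 e he).symm
  · simp only [fibreMatrix_inr, hone, hg.symm, if_false]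

variable [Fintype G]

theorem sum_fibreMatrix_inl (helem : ∀ a : G, a ^ 2 = 1) :
    ∑ y, fibreMatrix R x g y (Sum.inl d) = 1 := by
  obtain ⟨e, he⟩ := exists_ne d
  simp only [fibreMatrix_inl helem he, sum_ite_offset_and_offset R x he.symm]

theorem sum_fibreMatrix_inr :
    ∑ y, fibreMatrix R x g y (Sum.inr d) = Fintype.card G :=
  sum_ite_offset R x d g

theorem sum_fibreMatrix_inl_mul_inl (helem : ∀ a : G, a ^ 2 = 1) (hg : g ≠ 1) :
    ∑ y, fibreMatrix R x g y (Sum.inl d) * fibreMatrix R x h y (Sum.inl e) =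
      if d = e ∧ g = h then 1 else 0 := by
  obtain rfl | hde := eq_or_ne d e
  · obtain ⟨e, he⟩ := exists_ne d
    have hterm (y : XG G) : fibreMatrix R x g y (Sum.inl d) * fibreMatrix R x h y (Sum.inl d) =
        if g = h then fibreMatrix R x g y (Sum.inl d) else 0 := by
      simp only [fibreMatrix_inl helem he]
      grind
    simp only [hterm, Finset.sum_ite_irrel, sum_fibreMatrix_inl helem]
    simp
  · rw [if_neg fun h ↦ hde h.1]
    refine Finset.sum_eq_zero fun y _ ↦ ?_
    rw [fibreMatrix_inl helem hde.symm, fibreMatrix_inl helem hde]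
    grind

theorem sum_fibreMatrix_inl_mul_inr (helem : ∀ a : G, a ^ 2 = 1) (hh : h ≠ 1) :
    ∑ y, fibreMatrix R x g y (Sum.inl d) * fibreMatrix R x h y (Sum.inr e) =
      if d ≠ e ∧ g = h then 1 else 0 := by
  have hterm (y : XG G) : fibreMatrix R x g y (Sum.inl d) * fibreMatrix R x h y (Sum.inr e) =
      if d ≠ e ∧ g = h then fibreMatrix R x g y (Sum.inl d) else 0 := by
    obtain rfl | hde := eq_or_ne d e
    · obtain ⟨f, hf⟩ := exists_ne d
      rw [fibreMatrix_inl helem hf, fibreMatrix_inr]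
      grind
    · rw [fibreMatrix_inl helem hde.symm, fibreMatrix_inr]
      grind
  simp only [hterm, Finset.sum_ite_irrel, sum_fibreMatrix_inl helem, Finset.sum_const_zero]

theorem sum_fibreMatrix_inr_mul_inr (x : XG G) (g h : G) (d e : Fin 3) :
    ∑ y, fibreMatrix R x g y (Sum.inr d) * fibreMatrix R x h y (Sum.inr e) =
      if d = e then (if g = h then (Fintype.card G : R) else 0) else 1 := by
  simp only [fibreMatrix_inr]
  obtain rfl | hde := eq_or_ne d e
  · have hterm (y : XG G) : (if offset x y d = g then 1 else 0 : R) *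
        (if offset x y d = h then 1 else 0) =
        if g = h then (if offset x y d = g then 1 else 0) else 0 := by
      grind
    simp only [hterm, Finset.sum_ite_irrel, sum_ite_offset, Finset.sum_const_zero, if_true]
  · simp only [← ite_and, mul_ite, mul_one, mul_zero, if_neg hde]
    exact (Finset.sum_congr rfl fun y _ ↦ by simp only [and_comm]).trans
      (sum_ite_offset_and_offset R x hde g h)

theorem transpose_fibreMatrix_mul_fibreMatrix (helem : ∀ a : G, a ^ 2 = 1)
    (hn : (Fintype.card G : R) = 2) (hg : g ≠ 1) (hh : h ≠ 1) :
    (fibreMatrix R x g)ᵀ * fibreMatrix R x h =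
      (if g = h then excessGram R else 0) + crossGram R := by
  have hsum (j l : Fin 3 ⊕ Fin 3) : ((fibreMatrix R x g)ᵀ * fibreMatrix R x h) j l =
      ∑ y, fibreMatrix R x g y j * fibreMatrix R x h y l :=
    rfl
  have hsum_comm (d e : Fin 3) :
      ∑ y, fibreMatrix R x g y (Sum.inr d) * fibreMatrix R x h y (Sum.inl e) =
        if e ≠ d ∧ h = g then 1 else 0 := by
    exact (Finset.sum_congr rfl fun y _ ↦ mul_comm _ _).trans (sum_fibreMatrix_inl_mul_inr helem hg)
  ext (d | d) (e | e)
  · rw [hsum, sum_fibreMatrix_inl_mul_inl helem hg]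
    split_ifs <;> simp_all [excessGram, crossGram]
  · rw [hsum, sum_fibreMatrix_inl_mul_inr helem hh]
    split_ifs <;> simp_all [excessGram, crossGram, coordAdj]
  · rw [hsum, hsum_comm]
    simp only [excessGram, crossGram, coordAdj, eq_comm (a := e), eq_comm (a := h), ne_eq]
    split_ifs <;> simp_all
  · rw [hsum, sum_fibreMatrix_inr_mul_inr, hn]
    split_ifs <;> simp_all [excessGram, crossGram, coordAdj]

end FibreMatrix

section GramRelations

theorem sum_subtype_ite_eq {α M : Type*} [Fintype α] [DecidableEq α] [AddCommMonoid M]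
    (p : α → Prop) [DecidablePred p] (a : α) (b : M) :
    ∑ g : {g // p g}, (if a = g then b else 0) = if p a then b else 0 := by
  split_ifs with ha
  · rw [Fintype.sum_eq_single ⟨a, ha⟩ fun g hg ↦ if_neg fun h ↦ hg (Subtype.ext h.symm), if_pos rfl]
  · exact Finset.sum_eq_zero fun g _ ↦ if_neg fun (h : a = g) ↦ ha (h ▸ g.2)

variable {G : Type} [Group G] {R : Type*} [CommRing R] {x y : XG G}

theorem relIndex_eq_coordClass_iff {d e : Fin 3} (hed : e ≠ d) :
    relIndex x y = coordClass d ↔ offset x y d = 1 ∧ offset x y e ≠ 1 := by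
  have h0 : ∀ d : Fin 3, coordClass d ≠ 0 := by decide
  have hinj : coordClass d ≠ coordClass e :=
    ((Fin.castSucc_injective 4).comp (Fin.succ_injective 3)).ne hed.symm
  rw [ne_eq, offset_eq_one_iff, offset_eq_one_iff]
  constructor
  · intro h
    simp only [h, h0, hinj, or_true, or_self, not_false_eq_true, and_self]
  · tauto

theorem fibreMatrix_inl_eq_mul [DecidableEq G] (helem : ∀ a : G, a ^ 2 = 1) {d e : Fin 3}
    (hed : e ≠ d) {g : G} (hg : g ≠ 1) (y : XG G) :
    fibreMatrix R x g y (Sum.inl d) =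
      classMatrix R x y (coordClass d) * fibreMatrix R x g y (Sum.inr e) := by
  rw [fibreMatrix_inl helem hed, fibreMatrix_inr, classMatrix_apply]
  simp only [relIndex_eq_coordClass_iff hed]
  grind

variable [Fintype G] [DecidableEq G]

theorem sum_fibreMatrix (helem : ∀ a : G, a ^ 2 = 1) (x : XG G) :
    ∑ g : {g : G // g ≠ 1}, fibreMatrix R x g = classMatrix R x * (fibreCoeff R)ᵀ := by
  ext y (d | d) <;> rw [Matrix.sum_apply, classMatrix_mul_apply]
  · obtain ⟨e, he⟩ := exists_ne d
    simp only [fibreMatrix_inl helem he, ite_and, Finset.sum_ite_irrel, sum_subtype_ite_eq,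
      fibreCoeff, Matrix.transpose_apply, Matrix.of_apply, Sum.elim_inl,
      relIndex_eq_coordClass_iff he, Finset.sum_const_zero]
  · simp only [fibreMatrix_inr, sum_subtype_ite_eq, fibreCoeff, Matrix.transpose_apply,
      Matrix.of_apply, Sum.elim_inr, ← offset_eq_one_iff, ne_eq, ite_not]

theorem classMatrix_coordClass (helem : ∀ a : G, a ^ 2 = 1) (x y : XG G) (d : Fin 3) :
    classMatrix R x y (coordClass d) =
      ∑ g : {g : G // g ≠ 1}, fibreMatrix R x g y (Sum.inl d) := by
  rw [← Matrix.sum_apply, sum_fibreMatrix helem, classMatrix_mul_apply, classMatrix_apply]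
  rfl

theorem sum_fibreMatrix_col (helem : ∀ a : G, a ^ 2 = 1) (hn : (Fintype.card G : R) = 2)
    (x : XG G) (g : G) (j : Fin 3 ⊕ Fin 3) :
    ∑ y, fibreMatrix R x g y j = ∑ e, excessGram R j (Sum.inl e) := by
  rcases j with d | d
  · simp [sum_fibreMatrix_inl helem, excessGram, Matrix.one_apply]
  · rw [sum_fibreMatrix_inr, hn]
    fin_cases d <;> simp [excessGram, coordAdj, Fin.sum_univ_three, one_add_one_eq_two]

theorem transpose_fibreMatrix_mul_classMatrix (helem : ∀ a : G, a ^ 2 = 1)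
    (hn : (Fintype.card G : R) = 2) {g : G} (hg : g ≠ 1) :
    (fibreMatrix R x g)ᵀ * classMatrix R x = fibreCoeff R * truncation R 4 := by
  have hbase (j : Fin 3 ⊕ Fin 3) : ((fibreMatrix R x g)ᵀ * classMatrix R x) j 0 = 0 := by
    simp [Matrix.mul_apply, classMatrix_apply_zero, fibreMatrix_self hg]
  have hcoord (j : Fin 3 ⊕ Fin 3) (e : Fin 3) :
      ((fibreMatrix R x g)ᵀ * classMatrix R x) j (coordClass e) = excessGram R j (Sum.inl e) := by
    calc ((fibreMatrix R x g)ᵀ * classMatrix R x) j (coordClass e)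
        = ∑ h : {h : G // h ≠ 1}, ((fibreMatrix R x g)ᵀ * fibreMatrix R x h) j (Sum.inl e) := by
          simp only [Matrix.mul_apply, classMatrix_coordClass helem, Finset.mul_sum]
          exact Finset.sum_comm
      _ = ∑ h : {h : G // h ≠ 1}, if g = h then excessGram R j (Sum.inl e) else 0 := by
          refine Finset.sum_congr rfl fun h _ ↦ ?_
          rw [transpose_fibreMatrix_mul_fibreMatrix helem hn hg h.2]
          rcases j with d | d <;> split_ifs <;> simp [crossGram]
      _ = excessGram R j (Sum.inl e) := by rw [sum_subtype_ite_eq, if_pos hg]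
  have htotal (j : Fin 3 ⊕ Fin 3) :
      ∑ i, ((fibreMatrix R x g)ᵀ * classMatrix R x) j i = ∑ y, fibreMatrix R x g y j := by
    simp only [Matrix.mul_apply, Matrix.transpose_apply]
    rw [Finset.sum_comm]
    simp only [← Finset.mul_sum, sum_classMatrix_row, mul_one]
  ext j i
  rw [mul_truncation_apply]
  obtain rfl | ⟨e, rfl⟩ | rfl := fin_five_cases i
  · rw [hbase, fibreCoeff_apply_zero, ite_self]
  · rw [hcoord, excessGram_eq_fibreCoeff, if_neg (Fin.castSucc_ne_last _)]
  · have hsum := htotal j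
    rw [sum_fin_five, hbase, sum_fibreMatrix_col helem hn, zero_add] at hsum
    simp only [hcoord, add_eq_left] at hsum
    rw [hsum, if_pos rfl]

theorem sum_classMatrix_col (helem : ∀ a : G, a ^ 2 = 1) (hn : (Fintype.card G : R) = 2)
    (x : XG G) (i : Fin 5) :
    ∑ y, classMatrix R x y i = if i = Fin.last 4 then 0 else 1 := by
  have hbase : ∑ y, classMatrix R x y 0 = 1 := by simp [classMatrix_apply_zero]
  have hcoord (d : Fin 3) : ∑ y, classMatrix R x y (coordClass d) = 1 := by
    simp only [classMatrix_coordClass helem]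
    rw [Finset.sum_comm]
    simp only [sum_fibreMatrix_inl helem, Finset.sum_const, Finset.card_univ, nsmul_eq_mul, mul_one,
      Fintype.card_subtype_compl, Fintype.card_unique]
    rw [Nat.cast_sub Fintype.card_pos, hn]
    norm_num
  have hcard : (Fintype.card (XG G) : R) = 4 := by
    rw [Fintype.card_of_bijective (bijective_coordPair (zero_ne_one (α := Fin 3))),
      Fintype.card_prod, Nat.cast_mul, hn]
    norm_num
  have htotal : ∑ i, ∑ y, classMatrix R x y i = 4 := by
    rw [Finset.sum_comm]
    simp [sum_classMatrix_row, hcard]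
  obtain rfl | ⟨d, rfl⟩ | rfl := fin_five_cases i
  · exact hbase
  · rw [hcoord, if_neg (Fin.castSucc_ne_last _)]
  · rw [if_pos rfl]
    simp only [sum_fin_five, hbase, hcoord, Fin.sum_univ_three] at htotal
    linear_combination htotal

theorem transpose_classMatrix_mul_classMatrix (helem : ∀ a : G, a ^ 2 = 1)
    (hn : (Fintype.card G : R) = 2) :
    (classMatrix R x)ᵀ * classMatrix R x = truncation R 4 := by
  ext i j
  rw [truncation, Matrix.diagonal_apply, ← sum_classMatrix_col helem hn x, Matrix.mul_apply]
  simp only [Matrix.transpose_apply, classMatrix_apply]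
  split_ifs with hij
  · exact Finset.sum_congr rfl fun y _ ↦ by grind
  · exact Finset.sum_eq_zero fun y _ ↦ by grind

variable (R) in
/-- The family of all matrices `fibreMatrix x g` with `g ≠ 1`. -/
abbrev fibreFamily (x : XG G) (g : {g : G // g ≠ 1}) : Matrix (XG G) (Fin 3 ⊕ Fin 3) R :=
  fibreMatrix R x g

theorem fibreSum_single_inr_inr (d : Fin 3) (y z : XG G) :
    fibreSum (fibreFamily R x) (Matrix.single (Sum.inr d) (Sum.inr d) 1) y z =
      if offset x y d = offset x z d ∧ offset x y d ≠ 1 then 1 else 0 := by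
  have hterm (g : {g : G // g ≠ 1}) :
      fibreFamily R x g y (Sum.inr d) * fibreFamily R x g z (Sum.inr d) =
        if offset x y d = g then (if offset x y d = offset x z d then 1 else 0) else 0 := by
    simp only [fibreMatrix_inr]
    grind
  simp only [fibreSum_single_apply, hterm, sum_subtype_ite_eq]
  grind

theorem isGramSystem_fibreFamily (helem : ∀ a : G, a ^ 2 = 1) (hn : (Fintype.card G : R) = 2)
    (x : XG G) :
    IsGramSystem (fibreFamily R x) (classMatrix R x) (excessGram R) (crossGram R) (fibreCoeff R)
      (truncation R 4) where
  transpose_mul_fibre g h := by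
    simp only [transpose_fibreMatrix_mul_fibreMatrix helem hn g.2 h.2, Subtype.ext_iff]
  fibre_transpose_mul g := transpose_fibreMatrix_mul_classMatrix helem hn g.2
  transpose_mul_self := transpose_classMatrix_mul_classMatrix helem hn
  sum_fibre := sum_fibreMatrix helem x

end GramRelations

section Generators

variable {F : Type} [Field F] {G : Type} [Group G] [DecidableEq G] {x : XG G}

theorem dualE_eq_diagonal (a : Fin 5) :
    DualE F x a = Matrix.diagonal fun y ↦ classMatrix F x y a := by
  ext y z
  rw [Matrix.diagonal_apply, classMatrix_apply, ← ite_and, DualE, Matrix.of_apply]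
  simp only [relIndex_eq_iff]

theorem adj_apply (b : Fin 5) (y z : XG G) :
    Adj F b y z = if relIndex y z = b then 1 else 0 := by
  simp only [Adj, Matrix.of_apply, relIndex_eq_iff]

theorem sum_dualE : ∑ a, DualE F x a = 1 := by
  simp only [dualE_eq_diagonal]
  ext y z
  simp [Matrix.sum_apply, Matrix.diagonal_apply, Matrix.one_apply, Finset.sum_ite_irrel,
    sum_classMatrix_row]

theorem adj_zero : Adj F (0 : Fin 5) = (1 : Matrix (XG G) (XG G) F) := by
  ext y z
  simp only [adj_apply, relIndex_eq_iff, rel_zero_iff, Matrix.one_apply]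

variable (F G) in
theorem sum_adj : ∑ b, Adj F b = AllOne F G := by
  ext y z
  simp [Matrix.sum_apply, adj_apply, AllOne]

theorem transpose_dualE (a : Fin 5) : (DualE F x a)ᵀ = DualE F x a := by
  rw [dualE_eq_diagonal, Matrix.diagonal_transpose]

theorem transpose_adj (b : Fin 5) : (Adj F b : Matrix (XG G) (XG G) F)ᵀ = Adj F b := by
  ext y z
  simp only [Adj, Matrix.transpose_apply, Matrix.of_apply, rel_comm (y := z)]

theorem sum_dualE_mul_adj_mul_dualE [Fintype G] (b : Fin 5) :
    ∑ a, ∑ c, DualE F x a * Adj F b * DualE F x c = Adj F b := by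
  simp only [← Finset.mul_sum, ← Finset.sum_mul, sum_dualE, one_mul, mul_one]

theorem sandwich_classMatrix_single [Fintype G] (a b : Fin 5) :
    sandwich (classMatrix F x) (Matrix.single a b 1) =
      DualE F x a * AllOne F G * DualE F x b := by
  ext y z
  simp [sandwich_single_apply, dualE_eq_diagonal, AllOne]

end Generators

section Identities

variable {F : Type} [Field F] {G : Type} [Group G] [Fintype G] [DecidableEq G] {x : XG G}
  {d e : Fin 3}

theorem fibreSum_single_inl (helem : ∀ a : G, a ^ 2 = 1) (hed : e ≠ d) (j : Fin 3 ⊕ Fin 3) :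
    fibreSum (fibreFamily F x) (Matrix.single (Sum.inl d) j 1) =
      DualE F x (coordClass d) * fibreSum (fibreFamily F x) (Matrix.single (Sum.inr e) j 1) := by
  ext y z
  rw [dualE_eq_diagonal, Matrix.diagonal_mul, fibreSum_single_apply, fibreSum_single_apply,
    Finset.mul_sum]
  exact Finset.sum_congr rfl fun g _ ↦ by
    rw [fibreFamily, fibreMatrix_inl_eq_mul helem hed g.2, mul_assoc]

theorem dualE_coordClass (helem : ∀ a : G, a ^ 2 = 1) (d : Fin 3) :
    DualE F x (coordClass d) =
      fibreSum (fibreFamily F x) (Matrix.single (Sum.inl d) (Sum.inl d) 1) := by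
  obtain ⟨e, hed⟩ := exists_ne d
  have heq (y z : XG G) : y = z ↔ offset x y d = offset x z d ∧ offset x y e = offset x z e :=
    (bijective_offsetPair x hed.symm).injective.eq_iff.symm.trans Prod.ext_iff
  have hterm (y z : XG G) (g : {g : G // g ≠ 1}) :
      fibreFamily F x g y (Sum.inl d) * fibreFamily F x g z (Sum.inl d) =
        if offset x y e = g then (if y = z ∧ offset x y d = 1 then 1 else 0) else 0 := by
    simp only [fibreMatrix_inl helem hed, heq]
    grind
  ext y z
  rw [dualE_eq_diagonal, Matrix.diagonal_apply, classMatrix_apply, fibreSum_single_apply]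
  simp only [hterm, sum_subtype_ite_eq, relIndex_eq_coordClass_iff hed]
  grind

theorem adj_zero_add_adj_coordClass (x : XG G) (d : Fin 3) :
    Adj F 0 + Adj F (coordClass d) =
      fibreSum (fibreFamily F x) (Matrix.single (Sum.inr d) (Sum.inr d) 1) +
        (DualE F x 0 + DualE F x (coordClass d)) * AllOne F G *
          (DualE F x 0 + DualE F x (coordClass d)) := by
  have hne : (0 : Fin 5) ≠ coordClass d := by revert d; decide
  have hadj (y z : XG G) : Adj F 0 y z + Adj F (coordClass d) y z =
      if offset x y d = offset x z d then 1 else 0 := by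
    simp only [adj_apply, offset_eq_offset_iff, coord_eq_iff]
    grind
  have hdual : DualE F x 0 + DualE F x (coordClass d) =
      Matrix.diagonal fun y ↦ if offset x y d = 1 then 1 else 0 := by
    rw [dualE_eq_diagonal, dualE_eq_diagonal, Matrix.diagonal_add]
    congr! 2 with y
    simp only [classMatrix_apply, offset_eq_one_iff]
    grind
  ext y z
  rw [hdual, Matrix.add_apply, Matrix.add_apply, hadj, fibreSum_single_inr_inr, mul_diagonal,
    diagonal_mul, AllOne, Matrix.of_apply]
  grind

end Identities

section Membership

theorem mem_of_sum_mem_of_castSucc_mem {M σ : Type*} [AddCommGroup M] [SetLike σ M]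
    [AddSubgroupClass σ M] {S : σ} {n : ℕ} {f : Fin (n + 1) → M} (hsum : ∑ i, f i ∈ S)
    (hf : ∀ i : Fin n, f i.castSucc ∈ S) (i : Fin (n + 1)) : f i ∈ S := by
  induction i using Fin.lastCases with
  | last =>
    rw [Fin.sum_univ_castSucc] at hsum
    exact (add_mem_cancel_left (sum_mem fun i _ ↦ hf i)).1 hsum
  | cast i => exact hf i

theorem map_mem_of_forall_map_single_mem {R A m σ : Type*} [CommRing R] [AddCommGroup A]
    [Module R A] [Finite m] [DecidableEq m] [SetLike σ A] [AddSubmonoidClass σ A]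
    [SMulMemClass σ R A] {S : σ} {f : Matrix m m R →ₗ[R] A}
    (hf : ∀ i j, f (Matrix.single i j 1) ∈ S) (B : Matrix m m R) : f B ∈ S := by
  cases nonempty_fintype m
  have hB : B = ∑ i, ∑ j, B i j • Matrix.single i j 1 := by
    simpa only [Matrix.smul_single, smul_eq_mul, mul_one] using Matrix.matrix_eq_sum_single B
  rw [hB]
  simp only [map_sum, map_smul]
  exact sum_mem fun i _ ↦ sum_mem fun j _ ↦ SMulMemClass.smul_mem _ (hf i j)

end Membership

section TerwilligerLe

variable {F : Type} [Field F] {G : Type} [Group G] [Fintype G] [DecidableEq G]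
  (helem : ∀ a : G, a ^ 2 = 1) (hn : (Fintype.card G : F) = 2) (x : XG G)

theorem dualE_mem_subalgebra (a : Fin 5) :
    DualE F x a ∈ (isGramSystem_fibreFamily helem hn x).subalgebra := by
  have hQ := isGramSystem_fibreFamily helem hn x
  have hsum : ∑ a, DualE F x a ∈ hQ.subalgebra := by
    rw [sum_dualE]
    exact one_mem _
  refine mem_of_sum_mem_of_castSucc_mem hsum (fun i ↦ ?_) a
  cases i using Fin.cases with
  | zero =>
    have hzero : DualE F x 0 = sandwich (classMatrix F x) (Matrix.single 0 0 1) := by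
      ext y z
      simp only [dualE_eq_diagonal, Matrix.diagonal_apply, sandwich_single_apply,
        classMatrix_apply_zero]
      grind
    exact hzero ▸ hQ.sandwich_mem_subalgebra _
  | succ d =>
    rw [dualE_coordClass helem d]
    exact hQ.fibreSum_mem_subalgebra _

theorem adj_mem_subalgebra (b : Fin 5) :
    Adj F b ∈ (isGramSystem_fibreFamily helem hn x).subalgebra := by
  have hQ := isGramSystem_fibreFamily helem hn x
  have hJ : AllOne F G ∈ hQ.subalgebra := by
    rw [AllOne, ← sandwich_classMatrix_one (x := x)]
    exact hQ.sandwich_mem_subalgebra _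
  refine mem_of_sum_mem_of_castSucc_mem (sum_adj F G ▸ hJ) (fun i ↦ ?_) b
  have hzero : Adj F 0 ∈ hQ.subalgebra := adj_zero (F := F) (G := G) ▸ one_mem _
  cases i using Fin.cases with
  | zero => exact hzero
  | succ d =>
    have hE := add_mem (dualE_mem_subalgebra helem hn x 0)
      (dualE_mem_subalgebra helem hn x (coordClass d))
    refine (add_mem_cancel_left hzero).1 ?_
    rw [adj_zero_add_adj_coordClass x d]
    exact add_mem (hQ.fibreSum_mem_subalgebra _) (mul_mem (mul_mem hE hJ) hE)

theorem terwilligerAlg_le :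
    TerwilligerAlg F G x ≤ (isGramSystem_fibreFamily helem hn x).subalgebra := by
  refine Algebra.adjoin_le ?_
  rintro _ ⟨a, b, c, rfl⟩
  exact mul_mem (mul_mem (dualE_mem_subalgebra helem hn x a) (adj_mem_subalgebra helem hn x b))
    (dualE_mem_subalgebra helem hn x c)

end TerwilligerLe

section LeTerwilliger

variable {F : Type} [Field F] {G : Type} [Group G] [Fintype G] [DecidableEq G] {x : XG G}

theorem dualE_mem_terwilligerAlg (a : Fin 5) : DualE F x a ∈ TerwilligerAlg F G x := by
  have hidem : DualE F x a * DualE F x a = DualE F x a := by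
    simp [dualE_eq_diagonal, classMatrix_apply]
  refine Algebra.subset_adjoin ⟨a, 0, a, ?_⟩
  rw [adj_zero, mul_one, hidem]

theorem adj_mem_terwilligerAlg (b : Fin 5) : Adj F b ∈ TerwilligerAlg F G x := by
  rw [← sum_dualE_mul_adj_mul_dualE (x := x)]
  exact sum_mem fun a _ ↦ sum_mem fun c _ ↦ Algebra.subset_adjoin ⟨a, b, c, rfl⟩

theorem allOne_mem_terwilligerAlg : AllOne F G ∈ TerwilligerAlg F G x :=
  sum_adj F G ▸ sum_mem fun b _ ↦ adj_mem_terwilligerAlg b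

theorem transpose_mem_terwilligerAlg {t : Matrix (XG G) (XG G) F}
    (ht : t ∈ TerwilligerAlg F G x) : tᵀ ∈ TerwilligerAlg F G x := by
  induction ht using Algebra.adjoin_induction with
  | mem t ht =>
    obtain ⟨a, b, c, rfl⟩ := ht
    rw [Matrix.transpose_mul, Matrix.transpose_mul, transpose_dualE, transpose_dualE,
      transpose_adj, ← Matrix.mul_assoc]
    exact Algebra.subset_adjoin ⟨c, b, a, rfl⟩
  | algebraMap r =>
    rw [Matrix.algebraMap_eq_diagonal, Matrix.diagonal_transpose]
    exact algebraMap_mem _ r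
  | add s t _ _ hs ht => exact add_mem hs ht
  | mul s t _ _ hs ht => exact Matrix.transpose_mul s t ▸ mul_mem ht hs

theorem sandwich_mem_terwilligerAlg (B : Matrix (Fin 5) (Fin 5) F) :
    sandwich (classMatrix F x) B ∈ TerwilligerAlg F G x := by
  refine map_mem_of_forall_map_single_mem (fun a b ↦ ?_) B
  rw [sandwich_classMatrix_single]
  exact mul_mem (mul_mem (dualE_mem_terwilligerAlg a) allOne_mem_terwilligerAlg)
    (dualE_mem_terwilligerAlg b)

theorem fibreSum_single_inr_inr_mem (d : Fin 3) :
    fibreSum (fibreFamily F x) (Matrix.single (Sum.inr d) (Sum.inr d) 1) ∈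
      TerwilligerAlg F G x := by
  have hE : DualE F x 0 + DualE F x (coordClass d) ∈ TerwilligerAlg F G x :=
    add_mem (dualE_mem_terwilligerAlg _) (dualE_mem_terwilligerAlg _)
  rw [← add_mem_cancel_right (mul_mem (mul_mem hE allOne_mem_terwilligerAlg) hE),
    ← adj_zero_add_adj_coordClass x d]
  exact add_mem (adj_mem_terwilligerAlg _) (adj_mem_terwilligerAlg _)

theorem fibreSum_single_mem_comm {i j : Fin 3 ⊕ Fin 3} :
    fibreSum (fibreFamily F x) (Matrix.single i j 1) ∈ TerwilligerAlg F G x ↔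
      fibreSum (fibreFamily F x) (Matrix.single j i 1) ∈ TerwilligerAlg F G x := by
  constructor <;> intro h <;>
    simpa only [transpose_fibreSum, Matrix.transpose_single] using transpose_mem_terwilligerAlg h

variable (helem : ∀ a : G, a ^ 2 = 1)

include helem

theorem fibreSum_single_inl_mem {d e : Fin 3} (hed : e ≠ d) {j : Fin 3 ⊕ Fin 3}
    (hj : fibreSum (fibreFamily F x) (Matrix.single (Sum.inr e) j 1) ∈ TerwilligerAlg F G x) :
    fibreSum (fibreFamily F x) (Matrix.single (Sum.inl d) j 1) ∈ TerwilligerAlg F G x := by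
  rw [fibreSum_single_inl helem hed]
  exact mul_mem (dualE_mem_terwilligerAlg _) hj

theorem fibreSum_single_inl_inr_mem {d e : Fin 3} (hed : e ≠ d) :
    fibreSum (fibreFamily F x) (Matrix.single (Sum.inl d) (Sum.inr e) 1) ∈ TerwilligerAlg F G x :=
  fibreSum_single_inl_mem helem hed (fibreSum_single_inr_inr_mem e)

theorem fibreSum_single_inl_inl_mem (d f : Fin 3) :
    fibreSum (fibreFamily F x) (Matrix.single (Sum.inl d) (Sum.inl f) 1) ∈
      TerwilligerAlg F G x := by
  obtain ⟨e, hed, hef⟩ : ∃ e, e ≠ d ∧ e ≠ f := by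
    revert d f
    decide
  exact fibreSum_single_inl_mem helem hed
    (fibreSum_single_mem_comm.1 (fibreSum_single_inl_inr_mem helem hef))

variable (hn : (Fintype.card G : F) = 2)

include hn

theorem fibreSum_single_mem_trans {i j : Fin 3 ⊕ Fin 3} (d : Fin 3)
    (hi : fibreSum (fibreFamily F x) (Matrix.single i (Sum.inl d) 1) ∈ TerwilligerAlg F G x)
    (hj : fibreSum (fibreFamily F x) (Matrix.single (Sum.inl d) j 1) ∈ TerwilligerAlg F G x) :
    fibreSum (fibreFamily F x) (Matrix.single i j 1) ∈ TerwilligerAlg F G x := by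
  have hN : excessGram F (Sum.inl d) (Sum.inl d) = 1 := by simp [excessGram]
  have hK : crossGram F (Sum.inl d) (Sum.inl d) = 0 := by simp [crossGram]
  rw [← (isGramSystem_fibreFamily helem hn x).fibreSum_single_mul_single hN hK]
  exact mul_mem hi hj

theorem fibreSum_single_mem (i j : Fin 3 ⊕ Fin 3) :
    fibreSum (fibreFamily F x) (Matrix.single i j 1) ∈ TerwilligerAlg F G x := by
  have hinl (l : Fin 3 ⊕ Fin 3) (d : Fin 3) :
      fibreSum (fibreFamily F x) (Matrix.single (Sum.inl d) l 1) ∈ TerwilligerAlg F G x := by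
    rcases l with f | e
    · exact fibreSum_single_inl_inl_mem helem d f
    · obtain ⟨f, hf⟩ := exists_ne e
      exact fibreSum_single_mem_trans helem hn f (fibreSum_single_inl_inl_mem helem d f)
        (fibreSum_single_inl_inr_mem helem hf.symm)
  exact fibreSum_single_mem_trans helem hn 0 (fibreSum_single_mem_comm.1 (hinl i 0)) (hinl j 0)

variable (x) in
theorem terwilligerAlg_eq :
    TerwilligerAlg F G x = (isGramSystem_fibreFamily helem hn x).subalgebra :=
  le_antisymm (terwilligerAlg_le helem hn x) ((isGramSystem_fibreFamily helem hn x).subalgebra_le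
    (map_mem_of_forall_map_single_mem (fibreSum_single_mem helem hn)) sandwich_mem_terwilligerAlg)

end LeTerwilliger

section Nondegeneracy

variable {G : Type} [Group G] [Fintype G] (hcard : 3 ≤ Fintype.card G)

include hcard

theorem exists_ne_one_ne_one_ne : ∃ g h : G, g ≠ 1 ∧ h ≠ 1 ∧ g ≠ h := by
  obtain ⟨a, g, h, hag, hah, hgh⟩ := Fintype.two_lt_card_iff.1 hcard
  refine ⟨a⁻¹ * g, a⁻¹ * h, ?_, ?_, mul_right_injective _ |>.ne hgh⟩ <;>
    rwa [ne_eq, inv_mul_eq_one]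

theorem nontrivial_subtype_ne_one : Nontrivial {g : G // g ≠ 1} := by
  obtain ⟨g, h, hg, hh, hgh⟩ := exists_ne_one_ne_one_ne hcard
  exact ⟨⟨g, hg⟩, ⟨h, hh⟩, fun heq ↦ hgh (congrArg Subtype.val heq)⟩

theorem surjective_relIndex (x : XG G) : Function.Surjective (relIndex x) := by
  obtain ⟨g, h, hg, hh, hgh⟩ := exists_ne_one_ne_one_ne hcard
  intro i
  obtain rfl | ⟨d, rfl⟩ | rfl := fin_five_cases i
  · exact ⟨x, relIndex_eq_iff.2 (rel_zero_iff.2 rfl)⟩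
  · obtain ⟨e, hed⟩ := exists_ne d
    obtain ⟨y, hy⟩ := (bijective_offsetPair x hed.symm).surjective (1, g)
    obtain ⟨hd : offset x y d = 1, he : offset x y e = g⟩ := Prod.ext_iff.1 hy
    exact ⟨y, (relIndex_eq_coordClass_iff hed).2 ⟨hd, he.trans_ne hg⟩⟩
  · refine ⟨⟨![x.1 0 * g, h⁻¹ * x.1 1, x.1 0 * (g * h⁻¹) * x.1 1], by simp [mul_assoc]⟩,
      relIndex_eq_iff.2 (rel_last_iff.2 fun d ↦ ?_)⟩
    have hgh' : g * h⁻¹ ≠ 1 := by rwa [ne_eq, mul_inv_eq_one]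
    fin_cases d
    · simpa using hg
    · simpa using hh
    · simpa [← x.2] using hgh'

theorem exists_mul_classMatrix_eq_one [DecidableEq G] (R : Type*) [CommRing R] (x : XG G) :
    ∃ L : Matrix (Fin 5) (XG G) R, L * classMatrix R x = 1 := by
  obtain ⟨s, hs⟩ := (surjective_relIndex hcard x).hasRightInverse
  refine ⟨(1 : Matrix (XG G) (XG G) R).submatrix s (Equiv.refl _), ?_⟩
  rw [Matrix.one_submatrix_mul]
  ext i j
  simp [classMatrix_apply, Matrix.one_apply, hs i]

end Nondegeneracy

theorem stmt16 (F : Type) [Field F] (G : Type) [Group G] [Fintype G] [DecidableEq G]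
    (hp : ringChar F ≠ 2)
    (helem : ∀ a : G, a ^ 2 = 1) (hcard : 3 ≤ Fintype.card G)
    (hn : (Fintype.card G : F) = 2) (x : XG G) :
    ∃ φ : TerwilligerAlg F G x →ₐ[F]
        (Matrix (Fin 6) (Fin 6) F × Matrix (Fin 4) (Fin 4) F × F),
      Function.Surjective φ ∧
      ∃ m : ℕ, 1 ≤ m ∧
        ∀ f : Fin m → TerwilligerAlg F G x,
          (∀ j, φ (f j) = 0) → (List.ofFn f).prod = 0 := by
  have h2 : (2 : F) ≠ 0 := Ring.two_ne_zero hp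
  have := nontrivial_subtype_ne_one hcard
  rw [terwilligerAlg_eq x helem hn]
  obtain ⟨φ, hφ, hker⟩ := (isGramSystem_fibreFamily helem hn x).exists_surjective_algHom h2.isUnit
    (isUnit_excessGram h2.isUnit) (exists_mul_classMatrix_eq_one hcard F x)
  let e : (Matrix (Fin 3 ⊕ Fin 3) (Fin 3 ⊕ Fin 3) F × Matrix (Fin 4) (Fin 4) F × F) ≃ₐ[F]
      Matrix (Fin 6) (Fin 6) F × Matrix (Fin 4) (Fin 4) F × F :=
    AlgEquiv.prodCongr (Matrix.reindexAlgEquiv F F finSumFinEquiv) AlgEquiv.refl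
  refine ⟨e.toAlgHom.comp φ, e.surjective.comp hφ, 3, by norm_num, fun f hf ↦ ?_⟩
  have hφf (j : Fin 3) : φ (f j) = 0 := (map_eq_zero_iff e e.injective).1 (hf j)
  simpa [List.ofFn_succ, mul_assoc] using hker _ _ _ (hφf 0) (hφf 1) (hφf 2)
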